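/- Let p : S^{d-1} → (0,∞) be measurable with 0 < ∫_{S^{d-1}} p dσ_{d-1} < ∞, and let t ∈ (0, ‖p‖_∞). Set N(t) = {x ∈ L(t) : μ_x(V(x,t)) < ω_{d-2}}, where L(t) = {x ∈ S^{d-1} : p(x) > t} and V(x,t) = {v ∈ S_x^{d-2} : λ₁(L(x,v,t)) > 0}. Then σ_{d-1}(N(t)) = 0. -/

import Mathlib

/-!
Write `B` for the cone over the superlevel set `{p > t}`. Great circles through `u` are the radial
projections of affine lines through a point of the ray `ℝ_{>0} u`, and null sets of the sphere
correspond to Lebesgue-null cones, so the theorem reduces to a claim about lines in `ℝ^d`: for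
almost every `x` and almost every direction `w`, if `x ∈ B` then `{s | x + s w ∈ B}` has positive
length. For a fixed `w` this follows from translation invariance of Lebesgue measure and Fubini,
since the set of exceptional `x` meets each line parallel to `w` in a null set (`ae_line`).

The transfer to the sphere rests on `hausdorff_null_of_cone_null` (a subset of the sphere whose cone
is Lebesgue-null is Hausdorff-null), used once on `S^{d-1}` for the base point and once in `u^⊥`
for the direction, on Fubini along `ℝ u ⊕ u^⊥` (`ae_decomp`), which turns almost every `w ∈ ℝ^d` into
almost every `c ∈ u^⊥`, and on `line_null`, which compares the parameter of the line with the angle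
on the great circle.
-/


open MeasureTheory Real ProbabilityTheory
open scoped RealInnerProductSpace ENNReal NNReal

noncomputable section

/-- Euclidean space `ℝ^d`. -/
abbrev E (d : ℕ) : Type := EuclideanSpace ℝ (Fin d)

/-- The unit sphere `S^{d-1} ⊆ ℝ^d`. -/
def sph (d : ℕ) : Set (E d) := Metric.sphere 0 1

/-- The great subsphere `S_x^{d-2}` with pole `x`. -/
def subsph (d : ℕ) (x : E d) : Set (E d) := {v | v ∈ sph d ∧ ⟪v, x⟫ = 0}

/-- The great circle (geodesic) `γ_{(x,v)}(θ) = cos θ • x + sin θ • v`. -/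
def geo {d : ℕ} (x v : E d) (θ : ℝ) : E d := Real.cos θ • x + Real.sin θ • v

/-- The canonical volume measure `σ_{d-1}` on the sphere: the `(d-1)`-dimensional
Hausdorff measure restricted to `S^{d-1}`. -/
def sphMeasure (d : ℕ) : Measure (E d) := (μH[(d:ℝ) - 1]).restrict (sph d)

/-- `ω_{d-2}`, the total volume of a `(d-2)`-dimensional unit sphere. -/
def omegaSub (d : ℕ) : ℝ≥0∞ :=
  μH[(d:ℝ) - 2] (Metric.sphere (0 : EuclideanSpace ℝ (Fin (d - 1))) 1)

/-- The geodesic level set `L(x,v,t) = {θ ∈ [0,2π) : p(γ_{(x,v)}(θ)) > t}`. -/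
def lvl {d : ℕ} (p : E d → ℝ) (x v : E d) (t : ℝ) : Set ℝ :=
  {θ | θ ∈ Set.Ico 0 (2 * π) ∧ t < p (geo x v θ)}

/-- The map `T_θ(x,v) = (cos θ x + sin θ v, sin θ x − cos θ v)`. -/
def Tmap {d : ℕ} (θ : ℝ) (x v : E d) : E d × E d :=
  (Real.cos θ • x + Real.sin θ • v, Real.sin θ • x - Real.cos θ • v)
/-- `V(x,t)`: the set of directions `v ∈ S_x^{d-2}` whose geodesic level set has positive
one-dimensional Lebesgue measure. -/
def Vset {d : ℕ} (p : E d → ℝ) (x : E d) (t : ℝ) : Set (E d) :=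
  {v | v ∈ subsph d x ∧ 0 < volume (lvl p x v t)}

/-! ### Lines meeting a measurable set -/

/-- For almost every point `x` and direction `w`, if `x ∈ B` then the line `x + ℝ w` meets `B` in a
set of positive length. For fixed `w`, the exceptional set `N` of points `x` meets each line
parallel to `w` in a null set, so by Fubini almost all of its translates along `w` are null, and
hence so is `N`. -/
lemma ae_line {V : Type*} [NormedAddCommGroup V] [InnerProductSpace ℝ V] [FiniteDimensional ℝ V]
    [MeasurableSpace V] [BorelSpace V] (μ : Measure V) [μ.IsAddHaarMeasure]
    {B : Set V} (hB : MeasurableSet B) :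
    ∀ᵐ x ∂μ, ∀ᵐ w ∂μ, ¬ (x ∈ B ∧ volume {s : ℝ | x + s • w ∈ B} = 0) := by
  have hmeas : MeasurableSet {z : V × V | ¬ (z.1 ∈ B ∧ volume {s : ℝ | z.1 + s • z.2 ∈ B} = 0)} := by
    have h1 : MeasurableSet {q : (V × V) × ℝ | q.1.1 + q.2 • q.1.2 ∈ B} :=
      (by fun_prop : Measurable fun q : (V × V) × ℝ => q.1.1 + q.2 • q.1.2) hB
    have h2 := measurable_measure_prodMk_left (ν := (volume : Measure ℝ)) h1
    exact ((measurable_fst hB).inter (h2 (measurableSet_singleton 0))).compl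
  rw [Measure.ae_ae_comm hmeas]
  refine .of_forall fun w => ?_
  let N : Set V := {x | x ∈ B ∧ volume {s : ℝ | x + s • w ∈ B} = 0}
  have hN : MeasurableSet N := by
    have := (measurable_id.prodMk measurable_const : Measurable fun x : V => (x, w)) hmeas.compl
    simpa [N, Set.preimage, Set.compl_def] using this
  have key : ∀ x : V, ∀ᵐ s : ℝ, x + s • w ∉ N := by
    intro x
    by_cases h : ∃ s₀ : ℝ, x + s₀ • w ∈ N
    · obtain ⟨s₀, -, h0⟩ := h
      have h1 : volume {s : ℝ | x + s • w ∈ B} = 0 := by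
        rw [← measure_preimage_add volume s₀]
        convert h0 using 3
        ext s
        simp [add_smul, add_assoc]
      refine measure_mono_null (fun s hs => ?_) h1
      simp only [Set.mem_compl_iff, Set.mem_ofPred_eq, not_not] at hs
      exact hs.1
    · push Not at h
      exact .of_forall h
  have hmeas2 : MeasurableSet {z : V × ℝ | z.1 + z.2 • w ∉ N} :=
    ((by fun_prop : Measurable fun z : V × ℝ => z.1 + z.2 • w) hN).compl
  have h3 : ∀ᵐ s : ℝ, ∀ᵐ x ∂μ, x + s • w ∉ N :=
    (Measure.ae_ae_comm hmeas2).1 (.of_forall key)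
  obtain ⟨s, hs⟩ := h3.exists
  have : μ N = 0 := by
    rw [← measure_preimage_add_right μ (s • w)]
    rw [ae_iff] at hs
    simpa [Set.preimage] using hs
  rw [ae_iff]
  simpa [N] using this

/-! ### Hausdorff-null subsets of spheres and Lebesgue-null cones -/

/-- Fubini for the orthogonal decomposition `V = ℝ e ⊕ e^⊥`. -/
lemma ae_decomp {V : Type*} [NormedAddCommGroup V] [InnerProductSpace ℝ V] [FiniteDimensional ℝ V]
    [MeasurableSpace V] [BorelSpace V] (μ : Measure V) [μ.IsAddHaarMeasure]
    {e : V} (he : ‖e‖ = 1) (ν : Measure (ℝ ∙ e)ᗮ) [ν.IsAddHaarMeasure] {P : V → Prop}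
    (h : ∀ᵐ y ∂μ, P y) : ∀ᵐ a : ℝ, ∀ᵐ c : (ℝ ∙ e)ᗮ ∂ν, P (a • e + (c : V)) := by
  have hee : ⟪e, e⟫ = (1 : ℝ) := by rw [real_inner_self_eq_norm_sq, he]; norm_num
  have horth : ∀ c : (ℝ ∙ e)ᗮ, ⟪e, (c : V)⟫ = (0 : ℝ) := fun c =>
    Submodule.mem_orthogonal_singleton_iff_inner_right.1 c.2
  let f : (ℝ × (ℝ ∙ e)ᗮ) →ₗ[ℝ] V :=
    (LinearMap.toSpanSingleton ℝ V e).coprod (ℝ ∙ e)ᗮ.subtype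
  have hf : ∀ z, f z = z.1 • e + z.2 := fun z => by simp [f]
  have hbij : Function.Bijective f := by
    constructor
    · rw [← LinearMap.ker_eq_bot, LinearMap.ker_eq_bot']
      rintro ⟨a, c⟩ hz
      rw [hf] at hz
      have h1 : ⟪e, a • e + (c : V)⟫ = (0 : ℝ) := by
        have := congrArg (fun y : V => (⟪e, y⟫ : ℝ)) hz
        simpa using this
      rw [inner_add_right, inner_smul_right, hee, horth] at h1
      have ha : a = 0 := by simpa using h1
      subst ha
      have hc : c = 0 := by simpa using hz
      rw [hc]; rfl
    · intro y
      refine ⟨(⟪e, y⟫, ⟨y - (⟪e, y⟫ : ℝ) • e, ?_⟩), ?_⟩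
      · rw [Submodule.mem_orthogonal_singleton_iff_inner_right, inner_sub_right, inner_smul_right,
          hee]
        ring
      · rw [hf]; simp
  let L : (ℝ × (ℝ ∙ e)ᗮ) ≃L[ℝ] V := (LinearEquiv.ofBijective f hbij).toContinuousLinearEquiv
  have hL : ∀ z, L z = z.1 • e + z.2 := hf
  have hac : ((volume : Measure ℝ).prod ν).map L ≪ μ :=
    Measure.absolutelyContinuous_isAddHaarMeasure _ _
  have h1 : ∀ᵐ z ∂((volume : Measure ℝ).prod ν), P (L z) :=
    ae_of_ae_map L.continuous.measurable.aemeasurable (hac.ae_le h)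
  have h2 := Measure.ae_ae_of_ae_prod h1
  simpa only [hL] using h2

lemma norm_normalize_sub_le {V : Type*} [NormedAddCommGroup V] [InnerProductSpace ℝ V]
    {a : ℝ} (ha : 0 < a) {x y : V} (hx : a ≤ ‖x‖) (hy : a ≤ ‖y‖) :
    ‖‖x‖⁻¹ • x - ‖y‖⁻¹ • y‖ ≤ 2 / a * ‖x - y‖ := by
  have hx0 : 0 < ‖x‖ := ha.trans_le hx
  have hy0 : 0 < ‖y‖ := ha.trans_le hy
  have e1 : ‖x‖⁻¹ • x - ‖y‖⁻¹ • y = ‖x‖⁻¹ • (x - y) + (‖x‖⁻¹ - ‖y‖⁻¹) • y := by module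
  have e2 : ‖(‖x‖⁻¹ - ‖y‖⁻¹) • y‖ ≤ ‖x‖⁻¹ * ‖x - y‖ := by
    rw [norm_smul, Real.norm_eq_abs]
    have : ‖x‖⁻¹ - ‖y‖⁻¹ = ‖x‖⁻¹ * (‖y‖ - ‖x‖) * ‖y‖⁻¹ := by field_simp
    rw [this, abs_mul, abs_mul, abs_of_pos (inv_pos.2 hx0), abs_of_pos (inv_pos.2 hy0), mul_assoc,
      inv_mul_cancel₀ hy0.ne', mul_one]
    gcongr
    rw [norm_sub_rev]
    exact abs_norm_sub_norm_le y x
  calc _ ≤ ‖‖x‖⁻¹ • (x - y)‖ + ‖(‖x‖⁻¹ - ‖y‖⁻¹) • y‖ := by rw [e1]; exact norm_add_le _ _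
    _ ≤ ‖x‖⁻¹ * ‖x - y‖ + ‖x‖⁻¹ * ‖x - y‖ := by
        gcongr
        rw [norm_smul, norm_inv, norm_norm]
    _ ≤ a⁻¹ * ‖x - y‖ + a⁻¹ * ‖x - y‖ := by gcongr
    _ = _ := by ring

/-- A subset `N` of the unit sphere spanning a Lebesgue-null cone is null for the Hausdorff
measure of the sphere. The part of `N` in the half-space `⟪e, y⟫ > 0` is the image, under radial
projection, of a subset of the affine hyperplane `a e + e^⊥`; Fubini gives an `a > 0` for which this
subset is null, and radial projection is Lipschitz there. Finitely many half-spaces suffice. -/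
lemma hausdorff_null_of_cone_null {V : Type*} [NormedAddCommGroup V] [InnerProductSpace ℝ V]
    [FiniteDimensional ℝ V] [MeasurableSpace V] [BorelSpace V] (μ : Measure V)
    [μ.IsAddHaarMeasure] {n : ℕ} (hn : Module.finrank ℝ V = n + 1)
    {N : Set V} (hN1 : ∀ y ∈ N, ‖y‖ = 1) (hN : ∀ᵐ y ∂μ, ‖y‖⁻¹ • y ∉ N) :
    μH[(n : ℝ)] N = 0 := by
  have half : ∀ e : V, ‖e‖ = 1 → μH[(n : ℝ)] (N ∩ {y | 0 < (⟪e, y⟫ : ℝ)}) = 0 := by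
    intro e he
    have he0 : e ≠ 0 := by rintro rfl; simp at he
    have hee : ⟪e, e⟫ = (1 : ℝ) := by rw [real_inner_self_eq_norm_sq, he]; norm_num
    have horth : ∀ c : (ℝ ∙ e)ᗮ, ⟪e, (c : V)⟫ = (0 : ℝ) := fun c =>
      Submodule.mem_orthogonal_singleton_iff_inner_right.1 c.2
    have : Fact (Module.finrank ℝ V = n + 1) := ⟨hn⟩
    have hfr : Module.finrank ℝ (ℝ ∙ e)ᗮ = n := Submodule.finrank_orthogonal_span_singleton he0
    have : (μH[(n : ℝ)] : Measure (ℝ ∙ e)ᗮ).IsAddHaarMeasure := by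
      rw [← hfr]; infer_instance
    have h1 := ae_decomp μ he (μH[(n : ℝ)] : Measure (ℝ ∙ e)ᗮ) hN
    obtain ⟨a, ha, hac⟩ : ∃ a : ℝ, 0 < a ∧
        ∀ᵐ c : (ℝ ∙ e)ᗮ ∂μH[(n : ℝ)], ‖a • e + (c : V)‖⁻¹ • (a • e + (c : V)) ∉ N := by
      have h2 := ae_restrict_of_ae (s := Set.Ioo (0 : ℝ) 1) h1
      have : (ae (volume.restrict (Set.Ioo (0 : ℝ) 1))).NeBot := by
        rw [ae_neBot]
        intro h
        have := congrArg (fun m => m Set.univ) h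
        simp at this
      obtain ⟨a, ha1, ha2⟩ := (h2.and (ae_restrict_mem measurableSet_Ioo)).exists
      exact ⟨a, ha2.1, ha1⟩
    let f : (ℝ ∙ e)ᗮ → V := fun c => ‖a • e + (c : V)‖⁻¹ • (a • e + (c : V))
    have hlow : ∀ c : (ℝ ∙ e)ᗮ, a ≤ ‖a • e + (c : V)‖ := by
      intro c
      have h3 : ⟪e, a • e + (c : V)⟫ = a := by
        rw [inner_add_right, inner_smul_right, hee, horth]; ring
      have h4 := real_inner_le_norm e (a • e + (c : V))
      rwa [h3, he, one_mul] at h4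
    have hlip : LipschitzWith (2 / a).toNNReal f := by
      refine LipschitzWith.of_dist_le_mul fun c c' => ?_
      rw [dist_eq_norm, Real.coe_toNNReal _ (by positivity)]
      refine (norm_normalize_sub_le ha (hlow c) (hlow c')).trans_eq ?_
      rw [add_sub_add_left_eq_sub, Subtype.dist_eq, dist_eq_norm]
    have hsub : N ∩ {y | 0 < (⟪e, y⟫ : ℝ)} ⊆ f '' {c | f c ∈ N} := by
      rintro y ⟨hyN, hy⟩
      have hk : 0 < (⟪e, y⟫ : ℝ) := hy
      have hmem : (a / (⟪e, y⟫ : ℝ)) • y - a • e ∈ (ℝ ∙ e)ᗮ := by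
        rw [Submodule.mem_orthogonal_singleton_iff_inner_right, inner_sub_right, inner_smul_right,
          inner_smul_right, hee]
        rw [div_mul_cancel₀ _ hk.ne', mul_one, sub_self]
      have hfy : f ⟨_, hmem⟩ = y := by
        have hpos : 0 < a / (⟪e, y⟫ : ℝ) := by positivity
        simp only [f, add_sub_cancel]
        rw [norm_smul, hN1 y hyN, mul_one, Real.norm_of_nonneg hpos.le, smul_smul,
          inv_mul_cancel₀ hpos.ne', one_smul]
      exact ⟨⟨_, hmem⟩, by simpa only [Set.mem_ofPred_eq, hfy] using hyN, hfy⟩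
    have hnull : μH[(n : ℝ)] {c | f c ∈ N} = 0 := by
      rw [ae_iff] at hac
      simpa [f] using hac
    refine measure_mono_null hsub (le_antisymm ?_ bot_le)
    refine (hlip.hausdorffMeasure_image_le (Nat.cast_nonneg n) _).trans ?_
    rw [hnull, mul_zero]
  let b := stdOrthonormalBasis ℝ V
  have hcov : N ⊆ ⋃ i, ((N ∩ {y | 0 < (⟪b i, y⟫ : ℝ)}) ∪ (N ∩ {y | 0 < (⟪-b i, y⟫ : ℝ)})) := by
    intro y hy
    by_contra hcon
    simp only [Set.mem_iUnion, Set.mem_union, Set.mem_inter_iff, hy, true_and, Set.mem_ofPred_eq,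
      inner_neg_left, not_exists, not_or, not_lt] at hcon
    have hy0 : y = 0 := by
      rw [← b.sum_repr' y]
      refine Finset.sum_eq_zero fun i _ => ?_
      rw [le_antisymm (hcon i).1 (by linarith [(hcon i).2]), zero_smul]
    have := hN1 y hy
    simp [hy0] at this
  refine measure_mono_null hcov (measure_iUnion_null fun i => measure_union_null ?_ ?_)
  · exact half _ (b.norm_eq_one i)
  · exact half _ (by rw [norm_neg]; exact b.norm_eq_one i)

/-! ### Lines and great circles -/

/-- The value of `p` at the radial projection of `y` to the sphere. -/
def radial {d : ℕ} (p : E d → ℝ) (y : E d) : ℝ := p (‖y‖⁻¹ • y)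

lemma radial_smul {d : ℕ} (p : E d → ℝ) {r : ℝ} (hr : 0 < r) {y : E d} (hy : ‖y‖ = 1) :
    radial p (r • y) = p y := by
  rw [radial, norm_smul, hy, Real.norm_of_nonneg hr.le, mul_one, smul_smul,
    inv_mul_cancel₀ hr.ne', one_smul]

lemma norm_geo {d : ℕ} {u v : E d} (hu : ‖u‖ = 1) (hv : ‖v‖ = 1) (huv : ⟪v, u⟫ = (0 : ℝ)) (θ : ℝ) :
    ‖geo u v θ‖ = 1 := by
  have : ‖geo u v θ‖ ^ 2 = 1 := by
    rw [geo, norm_add_sq_real, inner_smul_left, inner_smul_right, real_inner_comm, huv, norm_smul,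
      norm_smul, hu, hv]
    simp
  nlinarith [norm_nonneg (geo u v θ)]

/-- The line through `r u` in direction `a u + b v` projects radially into the great circle
`geo u v`, and the inverse of this reparametrization is smooth; so it inherits null level sets
from the great circle. -/
lemma line_null {d : ℕ} (p : E d → ℝ) (t : ℝ) {u v : E d} (hu : ‖u‖ = 1) (hv : ‖v‖ = 1)
    (huv : ⟪v, u⟫ = (0 : ℝ)) {r a b : ℝ} (hr : 0 < r) (hb : 0 < b)
    (h : volume (lvl p u v t) = 0) :
    volume {s : ℝ | t < radial p (r • u + s • (a • u + b • v))} = 0 := by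
  let g : ℝ → ℝ := fun θ => r * Real.sin θ / (b * Real.cos θ - a * Real.sin θ)
  let D : Set ℝ := {θ | b * Real.cos θ - a * Real.sin θ ≠ 0}
  have hg : DifferentiableOn ℝ g (lvl p u v t ∩ D) := by
    intro θ hθ
    have hne : b * Real.cos θ - a * Real.sin θ ≠ 0 := hθ.2
    have : DifferentiableAt ℝ g θ := by
      refine DifferentiableAt.div ?_ ?_ hne <;> fun_prop
    exact this.differentiableWithinAt
  have h0 : volume (g '' (lvl p u v t ∩ D)) = 0 :=
    addHaar_image_eq_zero_of_differentiableOn_of_addHaar_eq_zero _ hg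
      (measure_mono_null Set.inter_subset_left h)
  refine measure_mono_null (fun s hs => ?_) h0
  -- polar coordinates of the point `(r + s a, s b)`
  let z : ℂ := ⟨r + s * a, s * b⟩
  have hz : z ≠ 0 := by
    intro hz
    have h1 : r + s * a = 0 := congrArg Complex.re hz
    have h2 : s * b = 0 := congrArg Complex.im hz
    rcases mul_eq_zero.1 h2 with h3 | h3
    · rw [h3] at h1; linarith
    · exact hb.ne' h3
  let θ := toIcoMod Real.two_pi_pos 0 z.arg
  have hθmem : θ ∈ Set.Ico 0 (2 * π) := by
    have := toIcoMod_mem_Ico Real.two_pi_pos 0 z.arg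
    simpa using this
  have hθ : θ = z.arg - toIcoDiv Real.two_pi_pos 0 z.arg * (2 * π) := by
    rw [← zsmul_eq_mul]; rfl
  have hρ : 0 < ‖z‖ := norm_pos_iff.2 hz
  have hcos : r + s * a = ‖z‖ * Real.cos θ := by
    rw [hθ, Real.cos_sub_int_mul_two_pi, Complex.norm_mul_cos_arg]
  have hsin : s * b = ‖z‖ * Real.sin θ := by
    rw [hθ, Real.sin_sub_int_mul_two_pi, Complex.norm_mul_sin_arg]
  have hden : ‖z‖ * (b * Real.cos θ - a * Real.sin θ) = b * r := by
    linear_combination (-b) * hcos + a * hsin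
  have hD : b * Real.cos θ - a * Real.sin θ ≠ 0 := by
    intro h1
    rw [h1, mul_zero] at hden
    exact (mul_pos hb hr).ne hden
  have hpt : r • u + s • (a • u + b • v) = ‖z‖ • geo u v θ := by
    have : r • u + s • (a • u + b • v) = (r + s * a) • u + (s * b) • v := by module
    rw [this, hcos, hsin, geo]
    module
  refine ⟨θ, ⟨⟨hθmem, ?_⟩, hD⟩, ?_⟩
  · have hs' : t < radial p (r • u + s • (a • u + b • v)) := hs
    rwa [hpt, radial_smul p hρ (norm_geo hu hv huv θ)] at hs'
  · change r * Real.sin θ / (b * Real.cos θ - a * Real.sin θ) = s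
    rw [div_eq_iff hD]
    apply mul_left_cancel₀ hρ.ne'
    linear_combination (-r) * hsin - s * hden

/-- The great subsphere with pole `u` is isometric to the unit sphere of `ℝ^{d-1}`. -/
lemma measure_subsph {d : ℕ} (hd : 3 ≤ d) {u : E d} (hu : ‖u‖ = 1) :
    μH[(d : ℝ) - 2] (subsph d u) = omegaSub d := by
  have hu0 : u ≠ 0 := by rintro rfl; simp at hu
  have : Fact (Module.finrank ℝ (E d) = (d - 1) + 1) := ⟨by simp; omega⟩
  let φ : EuclideanSpace ℝ (Fin (d - 1)) ≃ₗᵢ[ℝ] (ℝ ∙ u)ᗮ :=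
    (OrthonormalBasis.fromOrthogonalSpanSingleton (𝕜 := ℝ) (d - 1) hu0).repr.symm
  let ι : EuclideanSpace ℝ (Fin (d - 1)) →ₗᵢ[ℝ] E d :=
    (ℝ ∙ u)ᗮ.subtypeₗᵢ.comp φ.toLinearIsometry
  have himg : subsph d u = ι '' Metric.sphere 0 1 := by
    ext v
    simp only [subsph, sph, Set.mem_ofPred_eq, mem_sphere_zero_iff_norm, Set.mem_image]
    constructor
    · rintro ⟨hv, hvu⟩
      have hmem : v ∈ (ℝ ∙ u)ᗮ := Submodule.mem_orthogonal_singleton_iff_inner_left.2 hvu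
      refine ⟨φ.symm ⟨v, hmem⟩, ?_, ?_⟩
      · rw [LinearIsometryEquiv.norm_map]; exact hv
      · simp [ι]
    · rintro ⟨c, hc, rfl⟩
      refine ⟨by rw [LinearIsometry.norm_map, hc], ?_⟩
      exact Submodule.mem_orthogonal_singleton_iff_inner_left.1 (φ c).2
  rw [himg, omegaSub]
  refine ι.isometry.hausdorffMeasure_image (Or.inl ?_) _
  have : (3 : ℝ) ≤ d := by exact_mod_cast hd
  linarith

/-- If almost every line through `r u` meets the cone over `{p > t}` in a set of positive length,
then almost every great circle through `u` meets `{p > t}` in a set of positive length. -/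
lemma omegaSub_le {d : ℕ} (hd : 3 ≤ d) (p : E d → ℝ) (t : ℝ) {u : E d} (hu : ‖u‖ = 1)
    {r : ℝ} (hr : 0 < r)
    (h : ∀ᵐ w : E d, volume {s : ℝ | t < radial p (r • u + s • w)} ≠ 0) :
    omegaSub d ≤ μH[(d : ℝ) - 2] (Vset p u t) := by
  have hu0 : u ≠ 0 := by rintro rfl; simp at hu
  have : Fact (Module.finrank ℝ (E d) = (d - 1) + 1) := ⟨by simp; omega⟩
  have hfr : Module.finrank ℝ (ℝ ∙ u)ᗮ = (d - 2) + 1 := by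
    rw [Submodule.finrank_orthogonal_span_singleton hu0 (n := d - 1)]; omega
  let ν : Measure (ℝ ∙ u)ᗮ := μH[Module.finrank ℝ (ℝ ∙ u)ᗮ]
  obtain ⟨a, ha⟩ := (ae_decomp volume hu ν h).exists
  let N : Set (ℝ ∙ u)ᗮ := {v | ‖v‖ = 1 ∧ volume (lvl p u v t) = 0}
  have hN : μH[((d - 2 : ℕ) : ℝ)] N = 0 := by
    refine hausdorff_null_of_cone_null ν hfr (fun y hy => hy.1) ?_
    filter_upwards [ha] with c hc hcN
    have hc0 : 0 < ‖c‖ := by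
      rw [norm_pos_iff]
      rintro rfl
      simpa using hcN.1
    refine hc ?_
    have := line_null p t (a := a) hu (v := ((‖c‖⁻¹ • c : (ℝ ∙ u)ᗮ) : E d)) hcN.1
      (Submodule.mem_orthogonal_singleton_iff_inner_left.1 (‖c‖⁻¹ • c).2) hr hc0 hcN.2
    rwa [← Submodule.coe_smul, smul_smul, mul_inv_cancel₀ hc0.ne', one_smul] at this
  have hcast : ((d - 2 : ℕ) : ℝ) = (d : ℝ) - 2 := by
    rw [Nat.cast_sub (by omega)]; norm_num
  rw [hcast] at hN
  have hN' : μH[(d : ℝ) - 2] ((↑) '' N : Set (E d)) = 0 := by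
    rw [isometry_subtype_coe.hausdorffMeasure_image (Or.inl ?_), hN]
    rw [← hcast]; positivity
  have hsub : subsph d u ⊆ Vset p u t ∪ ((↑) '' N : Set (E d)) := by
    intro v hv
    by_cases h0 : volume (lvl p u v t) = 0
    · right
      have hv1 : ‖v‖ = 1 := by simpa [sph] using hv.1
      exact ⟨⟨v, Submodule.mem_orthogonal_singleton_iff_inner_left.2 hv.2⟩, ⟨hv1, h0⟩, rfl⟩
    · exact Or.inl ⟨hv, pos_iff_ne_zero.2 h0⟩
  calc omegaSub d = μH[(d : ℝ) - 2] (subsph d u) := (measure_subsph hd hu).symm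
    _ ≤ μH[(d : ℝ) - 2] (Vset p u t) + μH[(d : ℝ) - 2] ((↑) '' N : Set (E d)) :=
        (measure_mono hsub).trans (measure_union_le _ _)
    _ = _ := by rw [hN', add_zero]

/-! ### Null set of base points -/

/-- for `t ∈ (0, ‖p‖_∞)` the set
`N(t) = {x ∈ L(t) : μ_x(V(x,t)) < ω_{d-2}}` is a `σ_{d-1}`-null set. -/
theorem stmt7 {d : ℕ} (hd : 3 ≤ d) (p : E d → ℝ) (hp : Measurable p)
    (hpos : ∀ y ∈ sph d, 0 < p y)
    (hZ0 : 0 < ∫⁻ x, ENNReal.ofReal (p x) ∂sphMeasure d)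
    (hZtop : ∫⁻ x, ENNReal.ofReal (p x) ∂sphMeasure d < ⊤)
    (t : ℝ) (ht : 0 < t)
    (ht' : ENNReal.ofReal t < essSup (fun x => ENNReal.ofReal (p x)) (sphMeasure d)) :
    sphMeasure d {x | t < p x ∧ μH[(d:ℝ) - 2] (Vset p x t) < omegaSub d} = 0 := by
  rw [sphMeasure, Measure.restrict_apply' (show MeasurableSet (sph d) from Metric.isClosed_sphere.measurableSet)]
  have hcast : (d : ℝ) - 1 = ((d - 1 : ℕ) : ℝ) := by
    rw [Nat.cast_sub (by omega)]; norm_num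
  rw [hcast]
  have hB : MeasurableSet {y : E d | t < radial p y} := by
    have : Measurable (radial p) := hp.comp (by fun_prop)
    exact this measurableSet_Ioi
  refine hausdorff_null_of_cone_null (volume : Measure (E d)) (by simp; omega)
    (fun y hy => by simpa [sph] using hy.2) ?_
  filter_upwards [ae_line volume hB] with x hx hxN
  have hu : ‖‖x‖⁻¹ • x‖ = 1 := by simpa [sph] using hxN.2
  have hx0 : 0 < ‖x‖ := by
    rw [norm_pos_iff]
    rintro rfl
    simp at hu
  have hxu : ‖x‖ • (‖x‖⁻¹ • x) = x := by rw [smul_smul, mul_inv_cancel₀ hx0.ne', one_smul]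
  refine absurd hxN.1.2 (not_lt.2 (omegaSub_le hd p t hu hx0 ?_))
  rw [hxu]
  filter_upwards [hx] with w hw h0
  exact hw ⟨hxN.1.1, h0⟩

end
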